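/- Let l ≥ 1 and let x, y be natural numbers with x < 2^{l−1} and y < 2^{l−1}. Then (2^l + x − y) mod 2^l ≥ 2^{l−1} if and only if x < y. Equivalently, the most significant bit of the l-bit two's-complement representation of x − y equals 1 exactly when x < y. -/

import Mathlib

/-- The MSB of the `l`-bit two's-complement representation of `x - y`
is 1 exactly when `x < y`, for `x, y < 2^(l-1)`. -/
theorem msb_diff_iff_lt (l : ℕ) (hl : 1 ≤ l) (x y : ℕ)
    (hx : x < 2 ^ (l - 1)) (hy : y < 2 ^ (l - 1)) :
    2 ^ (l - 1) ≤ (2 ^ l + x - y) % 2 ^ l ↔ x < y := by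
  have hpow : 2 ^ l = 2 * 2 ^ (l - 1) := (mul_pow_sub_one (by omega) 2).symm
  rcases lt_or_ge x y with h | h
  · rw [Nat.mod_eq_of_lt (by omega)]
    omega
  · rw [Nat.add_sub_assoc h, Nat.add_mod_left, Nat.mod_eq_of_lt (by omega)]
    omega
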